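/- For the numerical semigroup H = ⟨6, 7, 10⟩, the kernel of the K-algebra map K[x,y,z] → K[t] sending x ↦ t^6, y ↦ t^7, z ↦ t^{10} equals the ideal (x^4 − y^2 z, y^4 − x^3 z, z^2 − x y^2). -/

import Mathlib

open MvPolynomial

/-- normal form of degree `n` in a ring with elements `x y z`. -/
def nf11 {R : Type*} [CommRing R] (x y z : R) (n : ℕ) : R :=
  if n % 6 = 0 then x ^ (n / 6)
  else if n % 6 = 1 then x ^ ((n - 7) / 6) * y
  else if n % 6 = 2 then x ^ ((n - 14) / 6) * y ^ 2
  else if n % 6 = 3 then x ^ ((n - 21) / 6) * y ^ 3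
  else if n % 6 = 4 then x ^ ((n - 10) / 6) * z
  else x ^ ((n - 17) / 6) * (y * z)

/-- a monomial value `w` of degree `n` in normal form. -/
def IsNF11 {R : Type*} [CommRing R] (x y z : R) (n : ℕ) (w : R) : Prop :=
  ∃ k : ℕ, (n = 6 * k ∧ w = x ^ k) ∨ (n = 6 * k + 7 ∧ w = x ^ k * y) ∨
    (n = 6 * k + 14 ∧ w = x ^ k * y ^ 2) ∨ (n = 6 * k + 21 ∧ w = x ^ k * y ^ 3) ∨
    (n = 6 * k + 10 ∧ w = x ^ k * z) ∨ (n = 6 * k + 17 ∧ w = x ^ k * (y * z))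

lemma IsNF11.eq {R : Type*} [CommRing R] {x y z : R} {n : ℕ} {w : R}
    (h : IsNF11 x y z n w) : nf11 x y z n = w := by
  obtain ⟨k, h | h | h | h | h | h⟩ := h <;> obtain ⟨rfl, rfl⟩ := h <;> unfold nf11
  · rw [if_pos (by omega), show 6 * k / 6 = k by omega]
  · rw [if_neg (by omega), if_pos (by omega), show (6 * k + 7 - 7) / 6 = k by omega]
  · rw [if_neg (by omega), if_neg (by omega), if_pos (by omega),
      show (6 * k + 14 - 14) / 6 = k by omega]
  · rw [if_neg (by omega), if_neg (by omega), if_neg (by omega), if_pos (by omega),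
      show (6 * k + 21 - 21) / 6 = k by omega]
  · rw [if_neg (by omega), if_neg (by omega), if_neg (by omega), if_neg (by omega),
      if_pos (by omega), show (6 * k + 10 - 10) / 6 = k by omega]
  · rw [if_neg (by omega), if_neg (by omega), if_neg (by omega), if_neg (by omega),
      if_neg (by omega), show (6 * k + 17 - 17) / 6 = k by omega]

lemma IsNF11.mulY {R : Type*} [CommRing R] {x y z : R} {n : ℕ} {w : R}
    (h1 : x ^ 4 = y ^ 2 * z) (h2 : y ^ 4 = x ^ 3 * z)
    (h : IsNF11 x y z n w) : IsNF11 x y z (n + 7) (w * y) := by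
  obtain ⟨k, h | h | h | h | h | h⟩ := h <;> obtain ⟨rfl, rfl⟩ := h
  · exact ⟨k, .inr <| .inl ⟨by omega, by ring⟩⟩
  · exact ⟨k, .inr <| .inr <| .inl ⟨by omega, by ring⟩⟩
  · exact ⟨k, .inr <| .inr <| .inr <| .inl ⟨by omega, by ring⟩⟩
  · exact ⟨k + 3, .inr <| .inr <| .inr <| .inr <| .inl
      ⟨by omega, by linear_combination x ^ k * h2⟩⟩
  · exact ⟨k, .inr <| .inr <| .inr <| .inr <| .inr ⟨by omega, by ring⟩⟩
  · exact ⟨k + 4, .inl ⟨by omega, by linear_combination - x ^ k * h1⟩⟩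

lemma IsNF11.mulZ {R : Type*} [CommRing R] {x y z : R} {n : ℕ} {w : R}
    (h1 : x ^ 4 = y ^ 2 * z) (h3 : z ^ 2 = x * y ^ 2)
    (h : IsNF11 x y z n w) : IsNF11 x y z (n + 10) (w * z) := by
  obtain ⟨k, h | h | h | h | h | h⟩ := h <;> obtain ⟨rfl, rfl⟩ := h
  · exact ⟨k, .inr <| .inr <| .inr <| .inr <| .inl ⟨by omega, by ring⟩⟩
  · exact ⟨k, .inr <| .inr <| .inr <| .inr <| .inr ⟨by omega, by ring⟩⟩
  · exact ⟨k + 4, .inl ⟨by omega, by linear_combination - x ^ k * h1⟩⟩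
  · exact ⟨k + 4, .inr <| .inl ⟨by omega, by linear_combination - x ^ k * y * h1⟩⟩
  · exact ⟨k + 1, .inr <| .inr <| .inl ⟨by omega, by linear_combination x ^ k * h3⟩⟩
  · exact ⟨k + 1, .inr <| .inr <| .inr <| .inl
      ⟨by omega, by linear_combination x ^ k * y * h3⟩⟩

lemma nf11_eq {R : Type*} [CommRing R] {x y z : R}
    (h1 : x ^ 4 = y ^ 2 * z) (h2 : y ^ 4 = x ^ 3 * z) (h3 : z ^ 2 = x * y ^ 2) (a b c : ℕ) :
    nf11 x y z (6 * a + 7 * b + 10 * c) = x ^ a * y ^ b * z ^ c := by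
  apply IsNF11.eq
  induction c with
  | succ c ih =>
    have := ih.mulZ h1 h3
    rwa [mul_assoc, ← pow_succ] at this
  | zero =>
    induction b with
    | succ b ih =>
      have := ih.mulY h1 h2
      rw [pow_zero, mul_one, mul_assoc, ← pow_succ] at this
      rw [pow_zero, mul_one]
      convert this using 1
      omega
    | zero => exact ⟨a, .inl ⟨by simp, by simp⟩⟩

theorem stmt_11 (K : Type*) [Field K] :
    RingHom.ker (MvPolynomial.aeval
        (![Polynomial.X ^ 6, Polynomial.X ^ 7, Polynomial.X ^ 10] :
          Fin 3 → Polynomial K)) =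
      Ideal.span {(X 0 : MvPolynomial (Fin 3) K) ^ 4 - X 1 ^ 2 * X 2,
        X 1 ^ 4 - X 0 ^ 3 * X 2, X 2 ^ 2 - X 0 * X 1 ^ 2} := by
  set I := Ideal.span {(X 0 : MvPolynomial (Fin 3) K) ^ 4 - X 1 ^ 2 * X 2,
        X 1 ^ 4 - X 0 ^ 3 * X 2, X 2 ^ 2 - X 0 * X 1 ^ 2} with hI
  apply le_antisymm
  · let q := Ideal.Quotient.mkₐ K I
    have h1 : q (X 0) ^ 4 = q (X 1) ^ 2 * q (X 2) := by
      simp only [← map_pow, ← map_mul]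
      exact Ideal.Quotient.eq.2 (Ideal.subset_span (by simp))
    have h2 : q (X 1) ^ 4 = q (X 0) ^ 3 * q (X 2) := by
      simp only [← map_pow, ← map_mul]
      exact Ideal.Quotient.eq.2 (Ideal.subset_span (by simp))
    have h3 : q (X 2) ^ 2 = q (X 0) * q (X 1) ^ 2 := by
      simp only [← map_pow, ← map_mul]
      exact Ideal.Quotient.eq.2 (Ideal.subset_span (by simp))
    let s : Polynomial K →ₗ[K] (MvPolynomial (Fin 3) K ⧸ I) :=
      (Polynomial.basisMonomials K).constr K (nf11 (q (X 0)) (q (X 1)) (q (X 2)))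
    have hs : ∀ n, s (Polynomial.X ^ n) = nf11 (q (X 0)) (q (X 1)) (q (X 2)) n := by
      intro n
      have := (Polynomial.basisMonomials K).constr_basis K
        (nf11 (q (X 0)) (q (X 1)) (q (X 2))) n
      rw [Polynomial.coe_basisMonomials] at this
      beta_reduce at this
      rwa [Polynomial.monomial_one_right_eq_X_pow] at this
    have key : s ∘ₗ (MvPolynomial.aeval
        (![Polynomial.X ^ 6, Polynomial.X ^ 7, Polynomial.X ^ 10] :
          Fin 3 → Polynomial K)).toLinearMap = q.toLinearMap := by
      apply (MvPolynomial.basisMonomials (Fin 3) K).ext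
      intro m
      have e : monomial m (1 : K) = X 0 ^ m 0 * X 1 ^ m 1 * X 2 ^ m 2 := by
        rw [monomial_eq, Finsupp.prod_fintype _ _ (by simp)]
        simp [Fin.prod_univ_three]
      rw [coe_basisMonomials]
      beta_reduce
      rw [e]
      simp only [LinearMap.comp_apply, AlgHom.toLinearMap_apply, map_mul, map_pow, aeval_X]
      simp only [Matrix.cons_val, ← pow_mul, ← pow_add]
      rw [hs, nf11_eq h1 h2 h3]
    intro p hp
    have hp' := RingHom.mem_ker.1 hp
    have := LinearMap.congr_fun key p
    simp only [LinearMap.comp_apply, AlgHom.toLinearMap_apply, hp', map_zero] at this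
    exact Ideal.Quotient.eq_zero_iff_mem.1 this.symm
  · rw [hI, Ideal.span_le]
    rintro p (rfl | rfl | rfl) <;>
      simp only [SetLike.mem_coe, RingHom.mem_ker, map_sub, map_mul, map_pow, aeval_X,
        Matrix.cons_val] <;> ring
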